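/- arXiv:1809.04802 — 3 statements merged into one kernel-verified Lean document; each statement's English description precedes it below -/
import Mathlib

section
/- Let G=(V,E) be a finite undirected graph with m = |E| edges, and let w₁, w₂ be edge-weight vectors such that |w₁ₑ − w₂ₑ| ≤ β for every e ∈ E (i.e., ‖w₁ − w₂‖_∞ ≤ β). Then for every nonempty subset S ⊆ V, |f_{w₁}(S) − f_{w₂}(S)| ≤ √(m/2) · β. -/
open Finset
open scoped Classical

/-- The set of edges of `G` whose both endpoints lie in `S`, i.e. `E(S)`. -/
noncomputable def edgesIn {V : Type*} [Fintype V] (G : SimpleGraph V) (S : Finset V) :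
    Finset (Sym2 V) :=
  G.edgeFinset.filter (fun e => ∀ v ∈ e, v ∈ S)

/-- The density `f_w(S) = w(S) / |S|` of the subgraph induced by `S`. -/
noncomputable def density {V : Type*} [Fintype V] (G : SimpleGraph V) (w : Sym2 V → ℝ)
    (S : Finset V) : ℝ :=
  (∑ e ∈ edgesIn G S, w e) / (S.card : ℝ)

/-!
By linearity, the difference of the two densities is the density of `w₁ - w₂`, which is at most
`|E(S)| / |S| * β` in absolute value. The two bounds `|E(S)| ≤ |S| ^ 2 / 2` and `|E(S)| ≤ m`
multiply to `|E(S)| ^ 2 ≤ m / 2 * |S| ^ 2`, that is, `|E(S)| / |S| ≤ √(m / 2)`.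
-/

section

variable {V : Type*} [Fintype V] (G : SimpleGraph V) (S : Finset V)

lemma edgesIn_subset_edgeFinset : edgesIn G S ⊆ G.edgeFinset :=
  filter_subset _ _

variable {G S} in
lemma mk_mem_edgesIn {u v : V} :
    s(u, v) ∈ edgesIn G S ↔ G.Adj u v ∧ u ∈ S ∧ v ∈ S := by
  simp [edgesIn]

lemma edgesIn_subset_image_offDiag : edgesIn G S ⊆ S.offDiag.image Sym2.mk.uncurry := by
  rintro ⟨u, v⟩ huv
  obtain ⟨hadj, hu, hv⟩ := mk_mem_edgesIn.1 huv
  exact mem_image.2 ⟨(u, v), mem_offDiag.2 ⟨hu, hv, hadj.ne⟩, rfl⟩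

lemma card_edgesIn_le_choose_two : #(edgesIn G S) ≤ (#S).choose 2 :=
  (card_le_card (edgesIn_subset_image_offDiag G S)).trans_eq (Sym2.card_image_offDiag S)

lemma card_edgesIn_le_sq_div_two : (#(edgesIn G S) : ℝ) ≤ (#S : ℝ) ^ 2 / 2 :=
  calc (#(edgesIn G S) : ℝ)
    _ ≤ ((#S).choose 2 : ℕ) := mod_cast card_edgesIn_le_choose_two G S
    _ ≤ (#S : ℝ) ^ 2 / 2 := by simpa using Nat.choose_le_pow_div (α := ℝ) 2 #S

lemma card_edgesIn_div_card_le_sqrt :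
    (#(edgesIn G S) : ℝ) / #S ≤ √((#G.edgeFinset : ℝ) / 2) := by
  have card_le_edges : (#(edgesIn G S) : ℝ) ≤ #G.edgeFinset :=
    mod_cast card_le_card (edgesIn_subset_edgeFinset G S)
  have card_sq_le : (#(edgesIn G S) : ℝ) ^ 2 ≤ (#G.edgeFinset : ℝ) / 2 * (#S : ℝ) ^ 2 :=
    calc (#(edgesIn G S) : ℝ) ^ 2
      _ = #(edgesIn G S) * #(edgesIn G S) := sq _
      _ ≤ #G.edgeFinset * ((#S : ℝ) ^ 2 / 2) := by
        gcongr
        exact card_edgesIn_le_sq_div_two G S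
      _ = (#G.edgeFinset : ℝ) / 2 * (#S : ℝ) ^ 2 := by ring
  apply Real.le_sqrt_of_sq_le
  rw [div_pow]
  exact div_le_of_le_mul₀ (by positivity) (by positivity) card_sq_le

lemma density_sub (w₁ w₂ : Sym2 V → ℝ) :
    density G (w₁ - w₂) S = density G w₁ S - density G w₂ S := by
  simp only [density, Pi.sub_apply, sum_sub_distrib, sub_div]

variable {G S} {w : Sym2 V → ℝ} {β : ℝ}

lemma abs_density_le_card_div_card_mul (hw : ∀ e ∈ edgesIn G S, |w e| ≤ β) :
    |density G w S| ≤ (#(edgesIn G S) : ℝ) / #S * β := by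
  have abs_weight_le : |∑ e ∈ edgesIn G S, w e| ≤ #(edgesIn G S) * β :=
    calc |∑ e ∈ edgesIn G S, w e|
      _ ≤ ∑ e ∈ edgesIn G S, |w e| := abs_sum_le_sum_abs _ _
      _ ≤ #(edgesIn G S) * β := by simpa only [nsmul_eq_mul] using sum_le_card_nsmul _ _ β hw
  calc |density G w S|
    _ = |∑ e ∈ edgesIn G S, w e| / #S := by rw [density, abs_div, Nat.abs_cast]
    _ ≤ #(edgesIn G S) * β / #S := by gcongr
    _ = (#(edgesIn G S) : ℝ) / #S * β := mul_div_right_comm _ _ _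

end

/-- If `|w₁ₑ − w₂ₑ| ≤ β` for every edge `e`, then for every nonempty `S ⊆ V`,
`|f_{w₁}(S) − f_{w₂}(S)| ≤ √(m/2) · β`, where `m = |E|`. -/
theorem density_diff_le_sqrt {V : Type*} [Fintype V] (G : SimpleGraph V)
    (w₁ w₂ : Sym2 V → ℝ) (β : ℝ)
    (hw : ∀ e ∈ G.edgeFinset, |w₁ e - w₂ e| ≤ β)
    (S : Finset V) (hS : S.Nonempty) :
    |density G w₁ S - density G w₂ S| ≤ Real.sqrt ((G.edgeFinset.card : ℝ) / 2) * β := by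
  have abs_diff_le : |density G w₁ S - density G w₂ S| ≤ (#(edgesIn G S) : ℝ) / #S * β := by
    rw [← density_sub]
    exact abs_density_le_card_div_card_mul fun e he ↦ hw e (edgesIn_subset_edgeFinset G S he)
  obtain no_edges | ⟨e, he⟩ := G.edgeFinset.eq_empty_or_nonempty
  · -- `β` may be negative here, but both bounds vanish.
    have no_edgesIn : edgesIn G S = ∅ :=
      subset_empty.1 (no_edges ▸ edgesIn_subset_edgeFinset G S)
    simpa [no_edges, no_edgesIn] using abs_diff_le
  · have β_nonneg : 0 ≤ β := (abs_nonneg _).trans (hw e he)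
    exact abs_diff_le.trans
      (mul_le_mul_of_nonneg_right (card_edgesIn_div_card_le_sqrt G S) β_nonneg)
end

section
/- Let G=(V,E) be a finite undirected graph in which every vertex has degree at least one, and let W = ∏_{e∈E}[lₑ, rₑ] be an edge-weight space with lₑ = 0 and rₑ > 0 for every e ∈ E. Then for every proper subset S ⊊ V there exists an edge-weight vector w ∈ W (i.e., 0 ≤ wₑ ≤ rₑ for all e) such that f_w(S) = 0 while the maximum density max over nonempty T ⊆ V of f_w(T) is strictly positive; consequently, the robust ratio of S under W equals 0. -/
open Finset
open scoped Classical

section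

variable {V : Type*} [Fintype V] {G : SimpleGraph V} {w : Sym2 V → ℝ} {S : Finset V} {e : Sym2 V}

theorem mem_edgesIn : e ∈ edgesIn G S ↔ e ∈ G.edgeFinset ∧ ∀ v ∈ e, v ∈ S :=
  mem_filter

theorem edgesIn_univ : edgesIn G univ = G.edgeFinset :=
  filter_true_of_mem fun _ _ v _ => mem_univ v

theorem nonempty_of_mem_edgesIn (he : e ∈ edgesIn G S) : S.Nonempty :=
  ⟨e.out.1, (mem_edgesIn.1 he).2 _ e.out_fst_mem⟩

theorem exists_mem_edgeFinset_notMem_edgesIn {v : V} (hdeg : 0 < G.degree v) (hv : v ∉ S) :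
    ∃ e ∈ G.edgeFinset, e ∉ edgesIn G S := by
  obtain ⟨u, hvu⟩ := (G.degree_pos_iff_exists_adj v).1 hdeg
  exact ⟨s(v, u), G.mem_edgeFinset.2 hvu,
    fun he => hv ((mem_edgesIn.1 he).2 v (Sym2.mem_mk_left v u))⟩

theorem density_eq_zero (hw : ∀ e ∈ edgesIn G S, w e = 0) : density G w S = 0 := by
  rw [density, sum_eq_zero hw, zero_div]

theorem density_pos (hw : ∀ e ∈ edgesIn G S, 0 ≤ w e) (he : e ∈ edgesIn G S) (hwe : 0 < w e) :
    0 < density G w S :=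
  div_pos (sum_pos' hw ⟨e, he, hwe⟩) (Nat.cast_pos.2 (nonempty_of_mem_edgesIn he).card_pos)

theorem exists_forall_density_le [Nonempty V] (G : SimpleGraph V) (w : Sym2 V → ℝ) :
    ∃ T : Finset V, T.Nonempty ∧ ∀ U : Finset V, U.Nonempty → density G w U ≤ density G w T := by
  have : Nonempty {U : Finset V // U.Nonempty} := ⟨univ, univ_nonempty⟩
  obtain ⟨⟨T, hT⟩, hmax⟩ :=
    Finite.exists_max fun U : {U : Finset V // U.Nonempty} => density G w U
  exact ⟨T, hT, fun U hU => hmax ⟨U, hU⟩⟩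

theorem robust_ratio_zero_of_proper_general {r : Sym2 V → ℝ} {e₀ : Sym2 V}
    (hr : ∀ e ∈ G.edgeFinset, 0 ≤ r e) (he₀ : e₀ ∈ G.edgeFinset) (he₀S : e₀ ∉ edgesIn G S)
    (hr₀ : 0 < r e₀) :
    ∃ w : Sym2 V → ℝ,
      (∀ e ∈ G.edgeFinset, 0 ≤ w e ∧ w e ≤ r e) ∧
      density G w S = 0 ∧
      ∃ T : Finset V, T.Nonempty ∧
        (∀ U : Finset V, U.Nonempty → density G w U ≤ density G w T) ∧
        0 < density G w T ∧
        density G w S / density G w T = 0 := by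
  let w : Sym2 V → ℝ := fun e => if e ∈ edgesIn G S then 0 else r e
  have hw : ∀ e ∈ G.edgeFinset, 0 ≤ w e ∧ w e ≤ r e := fun e he => by
    by_cases heS : e ∈ edgesIn G S <;> simp [w, heS, hr e he]
  have hw₀ : 0 < w e₀ := by simpa only [w, if_neg he₀S] using hr₀
  have hwS : density G w S = 0 := density_eq_zero fun _ he => if_pos he
  have hw_univ : 0 < density G w univ :=
    density_pos (fun e he => (hw e (mem_edgesIn.1 he).1).1) (by rwa [edgesIn_univ]) hw₀
  have : Nonempty V := ⟨e₀.out.1⟩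
  obtain ⟨T, hT, hmax⟩ := exists_forall_density_le G w
  exact ⟨w, hw, hwS, T, hT, hmax, hw_univ.trans_le (hmax univ univ_nonempty),
    by rw [hwS, zero_div]⟩

end

/-- If every vertex of `G` has degree at least one and the edge-weight space is
`W = ∏ₑ[0, rₑ]` with `rₑ > 0`, then for every proper subset `S ⊊ V` there is a
weight vector `w ∈ W` for which `f_w(S) = 0` while the maximum density is strictly
positive; consequently the robust ratio of `S` under `W` equals `0`. -/
theorem robust_ratio_zero_of_proper {V : Type*} [Fintype V] (G : SimpleGraph V)
    (hdeg : ∀ v : V, 0 < G.degree v)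
    (r : Sym2 V → ℝ) (hr : ∀ e ∈ G.edgeFinset, 0 < r e)
    (S : Finset V) (hS : S ⊂ Finset.univ) :
    ∃ w : Sym2 V → ℝ,
      (∀ e ∈ G.edgeFinset, 0 ≤ w e ∧ w e ≤ r e) ∧
      density G w S = 0 ∧
      ∃ T : Finset V, T.Nonempty ∧
        (∀ U : Finset V, U.Nonempty → density G w U ≤ density G w T) ∧
        0 < density G w T ∧
        density G w S / density G w T = 0 := by
  obtain ⟨v, -, hv⟩ := exists_of_ssubset hS
  obtain ⟨e, he, heS⟩ := exists_mem_edgeFinset_notMem_edgesIn (hdeg v) hv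
  exact robust_ratio_zero_of_proper_general (fun e he => (hr e he).le) he heS (hr e he)
end

section
/- Let G=(V,E) be a finite undirected graph with n = |V| ≥ 1 and at least one edge, and let W = ∏_{e∈E}[lₑ, rₑ] be an edge-weight space with lₑ = 0 and rₑ > 0 for every e ∈ E. Then there exists an edge-weight vector w ∈ W such that f_w(V) ≤ (2/n) · max over nonempty T ⊆ V of f_w(T); consequently, the robust ratio of the full vertex set V under W is at most 2/n. -/
open Finset
open scoped Classical

/-!
Give a single edge `e` its full weight `r e` and every other edge weight `0`. A set of
vertices then has positive density only if it contains both endpoints of `e`, so the two endpoints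
alone form a densest set, of density `r e / 2`, whereas all of `V` only reaches `r e / n`.
-/

section SingleEdge

variable {V : Type*} [Fintype V] {G : SimpleGraph V} {e : Sym2 V}

theorem mem_edgesIn_iff_toFinset_subset {S : Finset V} :
    e ∈ edgesIn G S ↔ e ∈ G.edgeFinset ∧ e.toFinset ⊆ S := by
  simp only [edgesIn, mem_filter, Finset.subset_iff, Sym2.mem_toFinset]

theorem card_toFinset_of_mem_edgeFinset (he : e ∈ G.edgeFinset) : #e.toFinset = 2 :=
  Sym2.card_toFinset_of_not_isDiag e
    (G.not_isDiag_of_mem_edgeSet (SimpleGraph.mem_edgeFinset.mp he))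

theorem density_single (he : e ∈ G.edgeFinset) (c : ℝ) (S : Finset V) :
    density G (Pi.single e c) S = if e.toFinset ⊆ S then c / #S else 0 := by
  simp only [density, sum_pi_single', mem_edgesIn_iff_toFinset_subset, he, true_and, ite_div,
    zero_div]

theorem density_single_toFinset (he : e ∈ G.edgeFinset) (c : ℝ) :
    density G (Pi.single e c) e.toFinset = c / 2 := by
  rw [density_single he, if_pos Subset.rfl, card_toFinset_of_mem_edgeFinset he, Nat.cast_ofNat]

theorem density_single_univ (he : e ∈ G.edgeFinset) (c : ℝ) :
    density G (Pi.single e c) univ = c / Fintype.card V := by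
  rw [density_single he, if_pos (subset_univ _), card_univ]

theorem density_single_le_density_single_toFinset (he : e ∈ G.edgeFinset) {c : ℝ} (hc : 0 ≤ c)
    (S : Finset V) :
    density G (Pi.single e c) S ≤ density G (Pi.single e c) e.toFinset := by
  rw [density_single_toFinset he, density_single he]
  split_ifs with hS
  · have two_le_card : (2 : ℝ) ≤ #S := by
      exact_mod_cast card_toFinset_of_mem_edgeFinset he ▸ card_le_card hS
    gcongr
  · positivity

end SingleEdge

-- Without `0 < density G w T`, the vector `w = 0` would be a witness, and it says nothing about the
-- quotient `density G w univ / density G w T`.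
theorem robust_ratio_of_univ_le_general {V : Type*} [Fintype V] (G : SimpleGraph V)
    (r : Sym2 V → ℝ) (hr : ∀ e ∈ G.edgeFinset, 0 ≤ r e) (hpos : ∃ e ∈ G.edgeFinset, 0 < r e) :
    ∃ w : Sym2 V → ℝ,
      (∀ e ∈ G.edgeFinset, 0 ≤ w e ∧ w e ≤ r e) ∧
      ∃ T : Finset V, T.Nonempty ∧
        (∀ U : Finset V, U.Nonempty → density G w U ≤ density G w T) ∧
        0 < density G w T ∧
        density G w univ = 2 / Fintype.card V * density G w T := by
  obtain ⟨e, he, hre⟩ := hpos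
  refine ⟨Pi.single e (r e), fun e' he' ↦ ?_, e.toFinset, ?_,
    fun U _ ↦ density_single_le_density_single_toFinset he hre.le U, ?_, ?_⟩
  · obtain rfl | hne := eq_or_ne e' e
    · simpa using hre.le
    · simpa [hne] using hr e' he'
  · exact card_pos.mp (by simp [card_toFinset_of_mem_edgeFinset he])
  · rw [density_single_toFinset he]
    exact half_pos hre
  · rw [density_single_univ he, density_single_toFinset he]
    ring

/-- If `G` has `n ≥ 1` vertices and at least one edge, and the edge-weight space is
`W = ∏ₑ[0, rₑ]` with `rₑ > 0`, then there is a weight vector `w ∈ W` such that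
`f_w(V) ≤ (2/n) · max_{T ≠ ∅} f_w(T)`; consequently the robust ratio of the full
vertex set `V` under `W` is at most `2/n`. -/
theorem robust_ratio_of_univ_le {V : Type*} [Fintype V] (G : SimpleGraph V)
    (hn : 1 ≤ Fintype.card V) (hE : G.edgeFinset.Nonempty)
    (r : Sym2 V → ℝ) (hr : ∀ e ∈ G.edgeFinset, 0 < r e) :
    ∃ w : Sym2 V → ℝ,
      (∀ e ∈ G.edgeFinset, 0 ≤ w e ∧ w e ≤ r e) ∧
      ∃ T : Finset V, T.Nonempty ∧
        (∀ U : Finset V, U.Nonempty → density G w U ≤ density G w T) ∧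
        density G w (Finset.univ : Finset V) ≤
          (2 / (Fintype.card V : ℝ)) * density G w T := by
  obtain ⟨e, he⟩ := hE
  obtain ⟨w, hw, T, hT, hmax, -, hratio⟩ :=
    robust_ratio_of_univ_le_general G r (fun e he ↦ (hr e he).le) ⟨e, he, hr e he⟩
  exact ⟨w, hw, T, hT, hmax, hratio.le⟩
end
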